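/- For all integers n ≥ 0, α ≥ 0, β ≥ 0, γ ≥ 0 and every k ∈ {1, 2, 3, 4, 5, 6}, the number of (4,8)-regular overpartitions satisfies p̄_{4,8}( 16 · 3^{4α} · 5^{4β} · 7^{4γ+3} · (7n + k) + 2 · 3^{4α} · 5^{4β} · 7^{4(γ+1)} ) ≡ 0 (mod 32). -/

import Mathlib

/-- The number of `(j,k)`-regular overpartitions of `n`: pairs `(λ, μ)` where `λ` is a
partition of some `m ≤ n` into distinct parts, `μ` is a partition of `n - m`, and no part
of `λ` or `μ` is congruent to `j` modulo `k`. -/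
def regularOverpartitions (j k n : ℕ) : ℕ :=
  ∑ m ∈ Finset.range (n + 1),
    ((Nat.Partition.distincts m).filter (fun lam => ∀ i ∈ lam.parts, i % k ≠ j)).card *
    ((Finset.univ : Finset (Nat.Partition (n - m))).filter
      (fun mu => ∀ i ∈ mu.parts, i % k ≠ j)).card

open PowerSeries

theorem seven_descent (c : ℕ) (hc : c = 1 ∨ c = 2) (e : ℕ) : ∀ x y r : ℕ,
    x * x + c * (y * y) = 7 ^ (2 * e + 1) * r → 7 ∣ r := by
  induction e with
  | zero =>
    intro x y r h
    have h7 : (x * x + c * (y * y)) % 7 = 0 := by rw [h]; simp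
    have hxy : x % 7 = 0 ∧ y % 7 = 0 := by
      have hx : x % 7 < 7 := Nat.mod_lt _ (by norm_num)
      have hy : y % 7 < 7 := Nat.mod_lt _ (by norm_num)
      rcases hc with rfl | rfl <;>
      · rw [Nat.add_mod, Nat.mul_mod x x, Nat.mul_mod _ (y * y), Nat.mul_mod y y] at h7
        generalize x % 7 = a at *
        generalize y % 7 = b at *
        interval_cases a <;> interval_cases b <;> simp_all
    obtain ⟨a, rfl⟩ := Nat.dvd_of_mod_eq_zero hxy.1
    obtain ⟨b, rfl⟩ := Nat.dvd_of_mod_eq_zero hxy.2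
    refine ⟨a * a + c * (b * b), ?_⟩
    have : 7 * (7 * (a * a + c * (b * b))) = 7 * r := by
      rw [show 2 * 0 + 1 = 1 by norm_num, pow_one] at h
      rw [← h]; ring
    omega
  | succ e ih =>
    intro x y r h
    have h7 : (x * x + c * (y * y)) % 7 = 0 := by
      rw [h, show 2 * (e + 1) + 1 = (2 * e + 2) + 1 by ring, pow_succ]; simp [Nat.mul_mod]
    have hxy : x % 7 = 0 ∧ y % 7 = 0 := by
      have hx : x % 7 < 7 := Nat.mod_lt _ (by norm_num)
      have hy : y % 7 < 7 := Nat.mod_lt _ (by norm_num)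
      rcases hc with rfl | rfl <;>
      · rw [Nat.add_mod, Nat.mul_mod x x, Nat.mul_mod _ (y * y), Nat.mul_mod y y] at h7
        generalize x % 7 = a at *
        generalize y % 7 = b at *
        interval_cases a <;> interval_cases b <;> simp_all
    obtain ⟨a, rfl⟩ := Nat.dvd_of_mod_eq_zero hxy.1
    obtain ⟨b, rfl⟩ := Nat.dvd_of_mod_eq_zero hxy.2
    apply ih a b r
    have : 7 ^ (2 * (e + 1) + 1) = 49 * 7 ^ (2 * e + 1) := by ring
    rw [this] at h
    nlinarith

open Classical in
/-- sum of `q^(k^2)`, `k ≥ 1` -/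
noncomputable def ser (R : Type) [CommRing R] : R⟦X⟧ :=
  PowerSeries.mk fun n => if n ≠ 0 ∧ IsSquare n then 1 else 0

noncomputable abbrev uu : ℤ⟦X⟧ := ser ℤ
noncomputable abbrev tt : ℤ⟦X⟧ := rescale (-1) uu
noncomputable def Bs : ℤ⟦X⟧ := 1 + 2 * uu
noncomputable def As : ℤ⟦X⟧ := rescale (-1) Bs

noncomputable def ex (d : ℕ) [NeZero d] : ℤ⟦X⟧ →+* ℤ⟦X⟧ := (expand d (NeZero.ne d)).toRingHom

theorem ex_apply (d : ℕ) [NeZero d] (f : ℤ⟦X⟧) : ex d f = expand d (NeZero.ne d) f := rfl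

theorem coeff_ex (d : ℕ) [NeZero d] (f : ℤ⟦X⟧) (n : ℕ) :
    coeff n (ex d f) = if d ∣ n then coeff (n / d) f else 0 := by
  rw [ex_apply, coeff_expand]

theorem ex_ex (d e c : ℕ) [NeZero d] [NeZero e] [NeZero c] (h : d * e = c) (f : ℤ⟦X⟧) :
    ex d (ex e f) = ex c f := by
  subst h
  exact (expand_mul d (NeZero.ne d) e (NeZero.ne e) f).symm


theorem As_eq : As = 1 + 2 * tt := by
  rw [As, Bs, map_add, map_mul, map_one, map_ofNat]

theorem coeff_uu_ne {n : ℕ} (h : coeff n uu ≠ 0) : IsSquare n ∧ n ≠ 0 := by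
  simp only [uu, ser, coeff_mk] at h
  split_ifs at h with h'
  · exact ⟨h'.2, h'.1⟩
  · exact absurd rfl h

theorem coeff_tt_ne {n : ℕ} (h : coeff n tt ≠ 0) : IsSquare n ∧ n ≠ 0 := by
  apply coeff_uu_ne
  intro h0
  apply h
  simp [tt, coeff_rescale, h0]

theorem coeff_ex_ne {d : ℕ} [NeZero d] {f : ℤ⟦X⟧} {n : ℕ} (h : coeff n (ex d f) ≠ 0) :
    ∃ k, n = d * k ∧ coeff k f ≠ 0 := by
  rw [coeff_ex] at h
  split_ifs at h with h'
  · obtain ⟨k, rfl⟩ := h'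
    exact ⟨k, rfl, by simpa [Nat.mul_div_cancel_left k (Nat.pos_of_ne_zero (NeZero.ne d))] using h⟩
  · exact absurd rfl h

theorem coeff_mul_ne {f g : ℤ⟦X⟧} {n : ℕ} (h : coeff n (f * g) ≠ 0) :
    ∃ a b, a + b = n ∧ coeff a f ≠ 0 ∧ coeff b g ≠ 0 := by
  rw [coeff_mul] at h
  obtain ⟨p, hp, hne⟩ := Finset.exists_ne_zero_of_sum_ne_zero h
  exact ⟨p.1, p.2, by simpa using hp, left_ne_zero_of_mul hne, right_ne_zero_of_mul hne⟩

/-- odd part of uu -/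
noncomputable def oo : ℤ⟦X⟧ := PowerSeries.mk fun n => if n % 2 = 1 then coeff n uu else 0

theorem coeff_oo_ne {n : ℕ} (h : coeff n oo ≠ 0) : IsSquare n ∧ n % 2 = 1 := by
  simp only [oo, coeff_mk] at h
  split_ifs at h with h'
  · exact ⟨(coeff_uu_ne h).1, h'⟩
  · exact absurd rfl h

theorem uu_split : uu = oo + ex 4 uu := by
  ext n
  rw [map_add, coeff_ex]
  simp only [oo, ser, coeff_mk, uu]
  by_cases h4 : 4 ∣ n
  · obtain ⟨k, rfl⟩ := h4
    have h1 : (4 * k) % 2 ≠ 1 := by omega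
    have h2 : IsSquare (4 * k) ↔ IsSquare k := by
      constructor
      · rintro ⟨r, hr⟩
        have : Even (r * r) := ⟨2 * k, by omega⟩
        obtain ⟨s, rfl⟩ : Even r := by simpa [Nat.even_mul] using this
        exact ⟨s, by nlinarith⟩
      · rintro ⟨r, rfl⟩; exact ⟨2 * r, by ring⟩
    simp [h1, h2]
  · simp only [h4, if_false, add_zero]
    by_cases h2 : n % 2 = 1
    · simp [h2]
    · have : ¬ IsSquare n := by
        rintro ⟨r, rfl⟩
        have : Even (r * r) := Nat.even_iff.mpr (by omega)
        obtain ⟨s, rfl⟩ : Even r := by simpa [Nat.even_mul] using this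
        exact h4 ⟨s * s, by ring⟩
      simp [h2, this]

theorem dvd_of_coeff (c : ℕ) {f : ℤ⟦X⟧} (h : ∀ n, (c : ℤ) ∣ coeff n f) : (c : ℤ⟦X⟧) ∣ f := by
  choose g hg using h
  refine ⟨PowerSeries.mk g, ?_⟩
  ext n
  rw [← nsmul_eq_mul, map_nsmul, hg]; simp

theorem coeff_natCast_mul (c n : ℕ) (f : ℤ⟦X⟧) : coeff n ((c : ℤ⟦X⟧) * f) = (c : ℤ) * coeff n f := by
  rw [← nsmul_eq_mul, map_nsmul]; simp

theorem frob2 (f : ℤ⟦X⟧) : (2 : ℤ⟦X⟧) ∣ f ^ 2 - ex 2 f := by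
  refine dvd_of_coeff 2 fun n => ?_
  rw [← ZMod.intCast_zmod_eq_zero_iff_dvd]
  have : map (Int.castRingHom (ZMod 2)) (f ^ 2 - ex 2 f) = 0 := by
    rw [map_sub, map_pow, ex_apply, map_expand, sub_eq_zero]
    generalize map (Int.castRingHom (ZMod 2)) f = g
    have h := MvPowerSeries.map_frobenius_expand (σ := Unit) (R := ZMod 2) 2 (by norm_num) (f := g)
    rw [ZMod.frobenius_zmod, MvPowerSeries.map_id] at h
    exact h.symm
  have h := congrArg (coeff n) this
  rw [coeff_map] at h
  simpa only [map_zero, eq_intCast] using h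

theorem tt_sub_uu : (2 : ℤ⟦X⟧) ∣ tt - uu := by
  refine dvd_of_coeff 2 fun n => ?_
  simp only [tt, map_sub, coeff_rescale]
  rcases neg_one_pow_eq_or ℤ n with h | h <;> simp only [h]
  · simp
  · exact ⟨- coeff n uu, by push_cast; ring⟩

theorem core (m : ℕ) (hm : m % 2 = 1) (h1 : ∀ x y, x * x + 1 * (y * y) ≠ m)
    (h2 : ∀ x y, x * x + 2 * (y * y) ≠ m) : (32 : ℤ) ∣ coeff m (Bs ^ 2 * ex 4 As) := by
  obtain ⟨g1, hg1⟩ := tt_sub_uu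
  obtain ⟨g2, hg2⟩ := frob2 uu
  have e1 : tt = uu + 2 * g1 := by linear_combination hg1
  have e2 : uu ^ 2 = ex 2 uu + 2 * g2 := by linear_combination hg2
  have e3 : ex 4 uu * ex 4 tt = ex 8 uu + 2 * ex 4 (g2 + uu * g1) := by
    have : uu * tt = ex 2 uu + 2 * (g2 + uu * g1) := by
      rw [e1]; linear_combination e2
    rw [← map_mul, this, map_add, map_mul, ex_ex 4 2 8 (by norm_num), map_ofNat]
  have key : Bs ^ 2 * ex 4 As = 1 + ((4 : ℕ) : ℤ⟦X⟧) * uu + ((4 : ℕ) : ℤ⟦X⟧) * (uu * uu)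
      + ((2 : ℕ) : ℤ⟦X⟧) * ex 4 tt + ((8 : ℕ) : ℤ⟦X⟧) * (uu * ex 4 tt)
      + ((8 : ℕ) : ℤ⟦X⟧) * (oo * oo * ex 4 tt) + ((8 : ℕ) : ℤ⟦X⟧) * (ex 4 (uu * uu * tt))
      + ((16 : ℕ) : ℤ⟦X⟧) * (oo * ex 8 uu)
      + ((32 : ℕ) : ℤ⟦X⟧) * (oo * ex 4 (g2 + uu * g1)) := by
    have hs := uu_split
    have hA : ex 4 As = 1 + 2 * ex 4 tt := by
      rw [As_eq, map_add, map_mul, map_one, map_ofNat]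
    have h3 : ex 4 (uu * uu * tt) = ex 4 uu * ex 4 uu * ex 4 tt := by
      rw [map_mul, map_mul]
    rw [hA, Bs, h3]
    generalize ex 4 (g2 + uu * g1) = G at *
    generalize ex 4 uu = E at *
    generalize ex 4 tt = T at *
    generalize ex 8 uu = E8 at *
    generalize uu = U at *
    push_cast
    linear_combination 8 * T * (U + oo + E) * hs + 16 * oo * e3
  have z0 : coeff m (1 : ℤ⟦X⟧) = 0 := by
    rw [coeff_one, if_neg (by omega)]
  have z1 : coeff m uu = 0 := by
    by_contra h
    obtain ⟨⟨r, hr⟩, -⟩ := coeff_uu_ne h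
    exact h1 r 0 (by omega)
  have z2 : coeff m (uu * uu) = 0 := by
    by_contra h
    obtain ⟨a, b, hab, ha, hb⟩ := coeff_mul_ne h
    obtain ⟨⟨r, hr⟩, -⟩ := coeff_uu_ne ha
    obtain ⟨⟨s, hs⟩, -⟩ := coeff_uu_ne hb
    exact h1 r s (by omega)
  have z3 : coeff m (ex 4 tt) = 0 := by
    by_contra h
    obtain ⟨a, ha, -⟩ := coeff_ex_ne h
    omega
  have z4 : coeff m (uu * ex 4 tt) = 0 := by
    by_contra h
    obtain ⟨a, b, hab, ha, hb⟩ := coeff_mul_ne h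
    obtain ⟨⟨r, hr⟩, -⟩ := coeff_uu_ne ha
    obtain ⟨c, rfl, hc⟩ := coeff_ex_ne hb
    obtain ⟨⟨s, hs⟩, -⟩ := coeff_tt_ne hc
    refine h1 r (2 * s) ?_
    rw [← hab, hr, hs]; ring
  have z5 : coeff m (oo * oo * ex 4 tt) = 0 := by
    by_contra h
    obtain ⟨a, b, hab, ha, hb⟩ := coeff_mul_ne h
    obtain ⟨c, d, hcd, hc, hd⟩ := coeff_mul_ne ha
    obtain ⟨e, rfl, -⟩ := coeff_ex_ne hb
    have := (coeff_oo_ne hc).2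
    have := (coeff_oo_ne hd).2
    omega
  have z6 : coeff m (ex 4 (uu * uu * tt)) = 0 := by
    by_contra h
    obtain ⟨a, ha, -⟩ := coeff_ex_ne h
    omega
  have z7 : coeff m (oo * ex 8 uu) = 0 := by
    by_contra h
    obtain ⟨a, b, hab, ha, hb⟩ := coeff_mul_ne h
    obtain ⟨⟨r, hr⟩, -⟩ := coeff_oo_ne ha
    obtain ⟨c, rfl, hc⟩ := coeff_ex_ne hb
    obtain ⟨⟨s, hs⟩, -⟩ := coeff_uu_ne hc
    refine h2 r (2 * s) ?_
    rw [← hab, hr, hs]; ring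
  rw [key]
  simp only [map_add, coeff_natCast_mul, z0, z1, z2, z3, z4, z5, z6, z7]
  simp

/-- the part with exponents `2` modulo `4` -/
noncomputable def pj (f : ℤ⟦X⟧) : ℤ⟦X⟧ := PowerSeries.mk fun n => if n % 4 = 2 then coeff n f else 0

theorem pj_add (f g : ℤ⟦X⟧) : pj (f + g) = pj f + pj g := by
  ext n
  simp only [pj, coeff_mk, map_add]
  split_ifs <;> simp

theorem pj_mul_ex (f g : ℤ⟦X⟧) : pj (f * ex 4 g) = pj f * ex 4 g := by
  ext n
  simp only [pj, coeff_mk, coeff_mul]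
  rw [← Finset.sum_filter_add_sum_filter_not (Finset.HasAntidiagonal.antidiagonal n) (fun p => 4 ∣ p.2),
    ← Finset.sum_filter_add_sum_filter_not (Finset.HasAntidiagonal.antidiagonal n) (fun p => 4 ∣ p.2)
      (fun p => (if p.1 % 4 = 2 then coeff p.1 f else 0) * coeff p.2 (ex 4 g))]
  have hz : ∀ h : ℕ → ℤ, ∑ p ∈ (Finset.HasAntidiagonal.antidiagonal n).filter (fun p => ¬ 4 ∣ p.2),
      h p.1 * coeff p.2 (ex 4 g) = 0 := by
    intro h
    refine Finset.sum_eq_zero fun p hp => ?_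
    rw [coeff_ex, if_neg (Finset.mem_filter.mp hp).2, mul_zero]
  rw [hz (fun i => coeff i f), hz (fun i => if i % 4 = 2 then coeff i f else 0), add_zero, add_zero]
  split_ifs with hn
  · refine Finset.sum_congr rfl fun p hp => ?_
    simp only [Finset.mem_filter, Finset.HasAntidiagonal.mem_antidiagonal] at hp
    rw [if_pos (by omega)]
  · symm
    refine Finset.sum_eq_zero fun p hp => ?_
    simp only [Finset.mem_filter, Finset.HasAntidiagonal.mem_antidiagonal] at hp
    rw [if_neg (by omega), zero_mul]

theorem pj_odd (g : ℤ⟦X⟧) : pj (oo * ex 2 g) = 0 := by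
  ext n
  simp only [pj, coeff_mk, map_zero]
  split_ifs with hn
  · by_contra h
    obtain ⟨a, b, hab, ha, hb⟩ := coeff_mul_ne h
    have := (coeff_oo_ne ha).2
    obtain ⟨e, rfl, -⟩ := coeff_ex_ne hb
    omega
  · rfl

theorem Bs_split : Bs = 2 * oo + ex 4 Bs := by
  have hs := uu_split
  rw [Bs, map_add, map_mul, map_one, map_ofNat]
  linear_combination 2 * hs

theorem Bs_coeff0 : coeff 0 Bs = 1 := by
  rw [Bs, map_add, show (2 : ℤ⟦X⟧) = ((2 : ℕ) : ℤ⟦X⟧) by norm_num, coeff_natCast_mul]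
  simp [ser]

theorem As_coeff0 : coeff 0 As = 1 := by
  rw [As, coeff_rescale, Bs_coeff0]; simp

theorem reduce (G : ℤ⟦X⟧) (hG : G * As * ex 8 As = ex 4 As) (hAB : Bs * As = ex 2 As ^ 2)
    (m : ℕ) (hm : m % 2 = 1) : (32 : ℤ) ∣ coeff (2 * m) G - coeff m (Bs ^ 2 * ex 4 As) := by
  have hc : ∀ d [NeZero d], ex d As ≠ 0 := by
    intro d _ h
    have := congrArg (coeff 0) h
    rw [coeff_ex, if_pos (dvd_zero d), Nat.zero_div, As_coeff0] at this
    simp at this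
  have hcB : ∀ d [NeZero d], ex d Bs ≠ 0 := by
    intro d _ h
    have := congrArg (coeff 0) h
    rw [coeff_ex, if_pos (dvd_zero d), Nat.zero_div, Bs_coeff0] at this
    simp at this
  have a2 : ex 2 Bs * ex 2 As = ex 4 As ^ 2 := by
    rw [← map_mul, hAB, map_pow, ex_ex 2 2 4 (by norm_num)]
  have a4 : ex 4 Bs * ex 4 As = ex 8 As ^ 2 := by
    rw [← map_mul, hAB, map_pow, ex_ex 4 2 8 (by norm_num)]
  have h1 : G * ex 4 As ^ 4 * ex 4 Bs = Bs * ex 2 Bs ^ 2 * ex 8 As := by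
    apply mul_right_cancel₀ (hc 8)
    have : G * ex 8 As * (Bs * As) = ex 4 As * Bs := by linear_combination Bs * hG
    rw [hAB] at this
    calc G * ex 4 As ^ 4 * ex 4 Bs * ex 8 As
        = (G * ex 8 As * ex 2 As ^ 2) * ex 2 Bs ^ 2 * ex 4 Bs := by
          linear_combination (- G * ex 4 Bs * ex 8 As) * (ex 4 As ^ 2 + ex 2 Bs * ex 2 As) * a2
      _ = Bs * ex 2 Bs ^ 2 * (ex 4 Bs * ex 4 As) := by rw [this]; ring
      _ = _ := by rw [a4]; ring
  have h2 : pj G * ex 4 (As ^ 4) = pj (ex 2 (Bs ^ 2)) * ex 8 As := by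
    apply mul_right_cancel₀ (hcB 4)
    rw [mul_assoc, ← map_mul, ← pj_mul_ex, map_mul, map_pow, ← mul_assoc, h1,
      ← ex_ex 4 2 8 (by norm_num), pj_mul_ex, ← map_pow]
    have : Bs * ex 2 (Bs ^ 2) = oo * ex 2 (2 * Bs ^ 2) + ex 2 (Bs ^ 2) * ex 4 Bs := by
      have hb := Bs_split
      rw [map_mul (ex 2) 2, map_ofNat]
      linear_combination (ex 2 (Bs ^ 2)) * hb
    rw [this, pj_add, pj_odd, zero_add, pj_mul_ex]
    ring
  have h3 : pj (ex 2 (Bs ^ 2)) = 4 * pj (ex 2 (uu + uu ^ 2)) := by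
    have : Bs ^ 2 = 1 + ((4 : ℕ) : ℤ⟦X⟧) * (uu + uu ^ 2) := by rw [Bs]; push_cast; ring
    rw [this, map_add, map_mul, map_one, map_natCast, pj_add]
    have p1 : pj 1 = 0 := by
      ext n
      simp only [pj, coeff_mk, map_zero, coeff_one]
      split_ifs <;> first | rfl | omega
    rw [p1, zero_add]
    ext n
    rw [show (4 : ℤ⟦X⟧) = ((4 : ℕ) : ℤ⟦X⟧) by norm_num, coeff_natCast_mul]
    simp only [pj, coeff_mk, coeff_natCast_mul]
    split_ifs <;> simp
  have h4 : ex 4 (As ^ 4) = 1 + 8 * ex 4 (tt + 3 * tt ^ 2 + 4 * tt ^ 3 + 2 * tt ^ 4) := by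
    have : As ^ 4 = 1 + 8 * (tt + 3 * tt ^ 2 + 4 * tt ^ 3 + 2 * tt ^ 4) := by rw [As_eq]; ring
    rw [this, map_add, map_mul (ex 4) 8, map_one, map_ofNat]
  generalize ex 4 (tt + 3 * tt ^ 2 + 4 * tt ^ 3 + 2 * tt ^ 4) = Y at h4
  have h5 : pj G = pj (ex 2 (Bs ^ 2)) * ex 8 As
      - ((32 : ℕ) : ℤ⟦X⟧) * (Y * (pj (ex 2 (uu + uu ^ 2)) * ex 8 As - 2 * Y * pj G)) := by
    rw [h4] at h2
    rw [h3] at h2 ⊢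
    push_cast
    linear_combination (1 - 8 * Y) * h2
  rw [← ex_ex 4 2 8 (by norm_num), ← pj_mul_ex, ex_ex 4 2 8 (by norm_num),
    ← ex_ex 2 4 8 (by norm_num), ← map_mul] at h5
  have h6 := congrArg (coeff (2 * m)) h5
  rw [map_sub, coeff_natCast_mul] at h6
  simp only [pj, coeff_mk, if_pos (show 2 * m % 4 = 2 by omega)] at h6
  rw [h6, coeff_ex, if_pos (by simp), Nat.mul_div_cancel_left _ (by norm_num)]
  simp
open PowerSeries.WithPiTopology Filter Topology

open Classical in
noncomputable def ww (ε : ℤ) (p : ℕ → Prop) (i : ℕ) : ℤ⟦X⟧ :=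
  if i ≠ 0 ∧ p i then 1 + ε • X ^ i else 1

noncomputable def W (ε : ℤ) (p : ℕ → Prop) : ℤ⟦X⟧ := ∏' i, ww ε p i

theorem ww_mult (ε : ℤ) (p : ℕ → Prop) : Multipliable (ww ε p) := by
  classical
  have : ww ε p = fun i => 1 + (if i ≠ 0 ∧ p i then ε • X ^ i else 0 : ℤ⟦X⟧) := by
    funext i
    simp only [ww]
    split_ifs <;> simp
  rw [this]
  apply multipliable_one_add_of_tendsto_order_atTop_nhds_top
  refine ENat.tendsto_nhds_top_iff_natCast_lt.mpr (fun n ↦ Filter.eventually_atTop.mpr ⟨n + 1, ?_⟩)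
  intro m hm
  have : ((m : ℕ) : ℕ∞) ≤ (if m ≠ 0 ∧ p m then ε • X ^ m else 0 : ℤ⟦X⟧).order := by
    apply nat_le_order
    intro i hi
    split_ifs
    · rw [map_zsmul, coeff_X_pow, if_neg (by omega)]; simp
    · simp
  refine lt_of_lt_of_le ?_ this
  exact_mod_cast hm

theorem ww_hasProd (ε : ℤ) (p : ℕ → Prop) : HasProd (ww ε p) (W ε p) := (ww_mult ε p).hasProd

theorem W_mul (ε : ℤ) (p q r : ℕ → Prop) (h1 : ∀ i, r i ↔ p i ∨ q i) (h2 : ∀ i, ¬ (p i ∧ q i)) :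
    W ε p * W ε q = W ε r := by
  refine (((ww_hasProd ε p).mul (ww_hasProd ε q)).congr_fun ?_).unique (ww_hasProd ε r)
  intro i
  have := h2 i
  simp only [ww, h1 i]
  by_cases hp : p i <;> by_cases hq : q i <;> by_cases h0 : i = 0 <;> simp_all

theorem continuous_rescale (r : ℤ) : Continuous (rescale r : ℤ⟦X⟧ →+* ℤ⟦X⟧) := by
  rw [continuous_iff_continuousAt]
  intro f
  rw [ContinuousAt, tendsto_iff_coeff_tendsto]
  intro d
  simp only [coeff_rescale]
  exact (((continuous_coeff ℤ d).tendsto f).const_mul _)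

theorem continuous_ex (d : ℕ) [NeZero d] : Continuous (ex d) := by
  rw [continuous_iff_continuousAt]
  intro f
  rw [ContinuousAt, tendsto_iff_coeff_tendsto]
  intro n
  simp only [coeff_ex]
  split_ifs
  · exact ((continuous_coeff ℤ _).tendsto f)
  · exact tendsto_const_nhds

theorem ex_ww (d : ℕ) [NeZero d] (ε : ℤ) (p q : ℕ → Prop) (h : ∀ i, q (d * i) ↔ p i) (i : ℕ) :
    ex d (ww ε p i) = ww ε q (d * i) := by
  have : d ≠ 0 := NeZero.ne d
  unfold ww
  by_cases hp : i ≠ 0 ∧ p i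
  · rw [if_pos hp, if_pos ⟨mul_ne_zero this hp.1, (h i).mpr hp.2⟩, map_add, map_one, map_zsmul,
      map_pow, ex_apply, expand_X, pow_mul]
  · rw [if_neg hp, if_neg, map_one]
    rintro ⟨h1, h2⟩
    exact hp ⟨fun h0 => h1 (by rw [h0, mul_zero]), (h i).mp h2⟩

theorem W_ex (d : ℕ) [NeZero d] (ε : ℤ) (p q : ℕ → Prop) (h : ∀ i, q (d * i) ↔ p i)
    (h' : ∀ i, q i → d ∣ i) : ex d (W ε p) = W ε q := by
  have h1 := (ww_hasProd ε p).map (ex d) (continuous_ex d)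
  have h2 : HasProd (ww ε q ∘ fun i => d * i) (ex d (W ε p)) := by
    convert h1 using 1
    funext i
    exact (ex_ww d ε p q h i).symm
  have hinj : Function.Injective (fun i : ℕ => d * i) :=
    fun a b hab => Nat.eq_of_mul_eq_mul_left (Nat.pos_of_ne_zero (NeZero.ne d)) hab
  rw [hinj.hasProd_iff] at h2
  · exact h2.unique (ww_hasProd ε q)
  · intro x hx
    rw [ww, if_neg]
    rintro ⟨-, hq⟩
    obtain ⟨k, rfl⟩ := h' x hq
    exact hx ⟨k, rfl⟩

theorem W_rescale (ε δ : ℤ) (p : ℕ → Prop) (h : ∀ i, p i → ε * (-1) ^ i = δ) :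
    rescale (-1) (W ε p) = W δ p := by
  have h1 := (ww_hasProd ε p).map (rescale (-1 : ℤ)) (continuous_rescale (-1))
  refine (h1.congr_fun ?_).unique (ww_hasProd δ p)
  intro i
  simp only [ww, Function.comp]
  split_ifs with hi
  · rw [map_add, map_one, ← h i hi.2, map_zsmul, map_pow, rescale_X, mul_pow, ← map_pow, mul_smul,
      ← smul_eq_C_mul]
    simp only [zsmul_eq_mul, smul_eq_C_mul]
    simp
  · simp

/-- finite Gauss identity -/
theorem gauss_tel {R : Type*} [CommRing R] (q : R) (n k : ℕ) (hk : k ≤ n + 1) :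
    ∑ j ∈ Finset.range k, ((-1) ^ j * q ^ ((n + 1) * j) * (∏ i ∈ Finset.range j, (1 + q ^ i)) *
      (∏ i ∈ Finset.Ico (j + 1) (n + 1), (1 - q ^ i))) * (q ^ j * (1 - q ^ (n + 1)) - (1 + q ^ (n + 1)))
    = (-1) ^ k * q ^ ((n + 1) * k) * (∏ i ∈ Finset.range k, (1 + q ^ i)) *
      (∏ i ∈ Finset.Ico k (n + 1), (1 - q ^ i)) := by
  induction k with
  | zero =>
    have : ∏ i ∈ Finset.Ico 0 (n + 1), (1 - q ^ i) = 0 :=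
      Finset.prod_eq_zero (i := 0) (by simp) (by simp)
    rw [this]; simp
  | succ k ih =>
    rw [Finset.sum_range_succ, ih (by omega), Finset.prod_range_succ,
      Finset.prod_eq_prod_Ico_succ_bot (show k < n + 1 by omega)]
    ring

noncomputable def TT {R : Type*} [CommRing R] (q : R) (n j : ℕ) : R :=
  (-1) ^ j * q ^ ((n + 1) * j) * (∏ i ∈ Finset.range j, (1 + q ^ i)) *
      (∏ i ∈ Finset.Ico (j + 1) (n + 1), (1 - q ^ i))

theorem gauss_fin {R : Type*} [CommRing R] (q : R) (n : ℕ) :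
    (1 + 2 * ∑ s ∈ Finset.range n, (-1) ^ (s + 1) * q ^ ((s + 1) ^ 2)) *
      ∏ i ∈ Finset.Ico 1 (n + 1), (1 + q ^ i) = ∑ j ∈ Finset.range (n + 1), TT q n j := by
  induction n with
  | zero => simp [TT]
  | succ n ih =>
    have h := gauss_tel q n (n + 1) le_rfl
    have hp : ∏ i ∈ Finset.range (n + 1), (1 + q ^ i) = 2 * ∏ i ∈ Finset.Ico 1 (n + 1), (1 + q ^ i) := by
      rw [Finset.range_eq_Ico, Finset.prod_eq_prod_Ico_succ_bot (show 0 < n + 1 by omega)]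
      norm_num
    have hstep : ∑ j ∈ Finset.range (n + 1), TT q (n + 1) j =
        (1 + q ^ (n + 1)) * ∑ j ∈ Finset.range (n + 1), TT q n j
          + (-1) ^ (n + 1) * q ^ ((n + 1) * (n + 1)) * (∏ i ∈ Finset.range (n + 1), (1 + q ^ i)) := by
      rw [Finset.Ico_self, Finset.prod_empty, mul_one] at h
      rw [← h, Finset.mul_sum, ← Finset.sum_add_distrib]
      refine Finset.sum_congr rfl fun j hj => ?_
      rw [Finset.mem_range] at hj
      simp only [TT]
      rw [Finset.prod_Ico_succ_top (show j + 1 ≤ n + 1 by omega)]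
      ring
    rw [Finset.sum_range_succ, Finset.prod_Ico_succ_top (show 1 ≤ n + 1 by omega),
      Finset.sum_range_succ _ (n + 1), hstep, ← ih]
    simp only [TT, Finset.Ico_self, Finset.prod_empty]
    rw [hp]
    ring

noncomputable def thn (n : ℕ) : ℤ⟦X⟧ :=
  1 + 2 * ∑ s ∈ Finset.range n, (-1) ^ (s + 1) * X ^ ((s + 1) ^ 2)

theorem coeff_thn (n d : ℕ) (h : d ≤ n) : coeff d (thn n) = coeff d As := by
  have h2 : (2 : ℤ⟦X⟧) = ((2 : ℕ) : ℤ⟦X⟧) := by norm_num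
  rw [As_eq, thn, map_add, map_add, h2, coeff_natCast_mul, coeff_natCast_mul]
  congr 2
  have hm : ∀ s : ℕ, coeff d ((-1) ^ (s + 1) * X ^ ((s + 1) ^ 2) : ℤ⟦X⟧) =
      if d = (s + 1) ^ 2 then (-1) ^ (s + 1) else 0 := by
    intro s
    have : ((-1) ^ (s + 1) : ℤ⟦X⟧) = C ((-1) ^ (s + 1)) := by rw [map_pow, map_neg, map_one]
    rw [this, coeff_C_mul, coeff_X_pow]
    split_ifs <;> simp
  rw [map_sum, tt, coeff_rescale]
  simp only [hm, uu, ser, coeff_mk]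
  by_cases hd : d ≠ 0 ∧ IsSquare d
  · obtain ⟨h0, r, rfl⟩ := hd
    have hr : r ≠ 0 := by rintro rfl; simp at h0
    rw [Finset.sum_eq_single (r - 1)]
    · have : r - 1 + 1 = r := by omega
      rw [this, if_pos (by ring), if_pos ⟨h0, ⟨r, rfl⟩⟩, mul_one]
      rcases Nat.even_or_odd r with he | ho
      · rw [he.neg_one_pow, (he.mul_left r).neg_one_pow]
      · rw [ho.neg_one_pow, (ho.mul ho).neg_one_pow]
    · intro b _ hb
      rw [if_neg]
      intro hh
      have : r = b + 1 := by nlinarith [Nat.pow_left_injective (n := 2) (by norm_num) (show r ^ 2 = (b + 1) ^ 2 by rw [← hh]; ring)]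
      omega
    · intro hn
      exfalso
      apply hn
      rw [Finset.mem_range]
      nlinarith [Nat.pos_of_ne_zero hr, Nat.sub_lt (Nat.pos_of_ne_zero hr) one_pos]
  · rw [if_neg hd, mul_zero]
    refine Finset.sum_eq_zero fun s _ => ?_
    rw [if_neg]
    rintro rfl
    exact hd ⟨by positivity, ⟨s + 1, by ring⟩⟩

theorem ww_range (ε : ℤ) (n : ℕ) : ∏ i ∈ Finset.range (n + 1), ww ε (fun _ => True) i =
    ∏ i ∈ Finset.Ico 1 (n + 1), (1 + ε • X ^ i) := by
  rw [Finset.range_eq_Ico, Finset.prod_eq_prod_Ico_succ_bot (show 0 < n + 1 by omega)]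
  have : ww ε (fun _ => True) 0 = 1 := by simp [ww]
  rw [this, one_mul]
  refine Finset.prod_congr rfl fun i hi => ?_
  rw [Finset.mem_Ico] at hi
  rw [ww, if_pos ⟨by omega, trivial⟩]

theorem TT_dvd (n j : ℕ) : (X : ℤ⟦X⟧) ^ (n + 1) ∣ TT X n (j + 1) := by
  rw [TT]
  apply Dvd.dvd.mul_right
  apply Dvd.dvd.mul_right
  apply Dvd.dvd.mul_left
  exact pow_dvd_pow _ (by nlinarith)

theorem gauss_diff (n d : ℕ) (hn : d ≤ n) :
    coeff d (thn n * (∏ i ∈ Finset.range (n + 1), ww 1 (fun _ => True) i) -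
     ∏ i ∈ Finset.range (n + 1), ww (-1) (fun _ => True) i) = 0 := by
  have hg := gauss_fin (X : ℤ⟦X⟧) n
  rw [ww_range, ww_range]
  simp only [one_smul, neg_smul, ← sub_eq_add_neg]
  rw [thn, hg, Finset.sum_range_succ']
  have h0 : TT (X : ℤ⟦X⟧) n 0 = ∏ i ∈ Finset.Ico 1 (n + 1), (1 - X ^ i) := by simp [TT]
  rw [h0, add_sub_cancel_right, map_sum]
  refine Finset.sum_eq_zero fun j _ => ?_
  exact X_pow_dvd_iff.mp (TT_dvd n j) d (by omega)

theorem gauss : As * W 1 (fun _ => True) = W (-1) (fun _ => True) := by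
  have t1 : Tendsto thn atTop (𝓝 As) := by
    rw [tendsto_iff_coeff_tendsto]
    intro d
    exact tendsto_atTop_of_eventually_const (i₀ := d) fun n hn => coeff_thn n d hn
  have tw : ∀ ε, Tendsto (fun n => ∏ i ∈ Finset.range (n + 1), ww ε (fun _ => True) i) atTop
      (𝓝 (W ε (fun _ => True))) := fun ε =>
    (ww_hasProd ε _).tendsto_prod_nat.comp (tendsto_add_atTop_nat 1)
  have t2 := (t1.mul (tw 1)).sub (tw (-1))
  have t3 : Tendsto (fun n => thn n * (∏ i ∈ Finset.range (n + 1), ww 1 (fun _ => True) i) -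
     ∏ i ∈ Finset.range (n + 1), ww (-1) (fun _ => True) i) atTop (𝓝 0) := by
    rw [tendsto_iff_coeff_tendsto]
    intro d
    refine tendsto_atTop_of_eventually_const (i₀ := d) fun n hn => ?_
    rw [gauss_diff n d hn, map_zero]
  exact sub_eq_zero.mp (tendsto_nhds_unique t2 t3)

theorem W_ne_zero (ε : ℤ) (p : ℕ → Prop) : W ε p ≠ 0 := by
  intro h
  have h1 := (ww_hasProd ε p).map (constantCoeff (R := ℤ)) (continuous_constantCoeff ℤ)
  have h2 : (constantCoeff (R := ℤ)) ∘ ww ε p = fun _ => 1 := by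
    funext i
    simp only [Function.comp, ww]
    split_ifs with hi
    · simp [hi.1]
    · simp
  rw [h2, h] at h1
  have := h1.unique hasProd_one
  simp at this

theorem As_odd : As * W 1 (fun i => i % 2 = 1) = ex 2 As * W (-1) (fun i => i % 2 = 1) := by
  apply mul_right_cancel₀ (W_ne_zero 1 (fun i => i % 2 = 0))
  have h1 := congrArg (ex 2) gauss
  rw [map_mul, W_ex 2 1 (fun _ => True) (fun i => i % 2 = 0) (by intro i; simp) (by intro i; omega),
    W_ex 2 (-1) (fun _ => True) (fun i => i % 2 = 0) (by intro i; simp) (by intro i; omega)] at h1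
  have w1 := W_mul 1 (fun i => i % 2 = 1) (fun i => i % 2 = 0) (fun _ => True) (by intro i; simp; omega) (by intro i; omega)
  have w2 := W_mul (-1) (fun i => i % 2 = 1) (fun i => i % 2 = 0) (fun _ => True) (by intro i; simp; omega) (by intro i; omega)
  have g := gauss
  rw [← w1, ← w2] at g
  linear_combination g - W (-1) (fun i => i % 2 = 1) * h1

theorem resc_ex (f : ℤ⟦X⟧) : rescale (-1) (ex 2 f) = ex 2 f := by
  ext n
  rw [coeff_rescale, coeff_ex]
  split_ifs with h
  · rw [(even_iff_two_dvd.mpr h).neg_one_pow, one_mul]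
  · simp

theorem Bs_As : Bs * As = ex 2 As ^ 2 := by
  have h := As_odd
  have h1 := congrArg (rescale (-1 : ℤ)) h
  rw [map_mul, map_mul, resc_ex,
    W_rescale 1 (-1) _ (by intro i hi; rw [(Nat.odd_iff.mpr hi).neg_one_pow]; norm_num),
    W_rescale (-1) 1 _ (by intro i hi; rw [(Nat.odd_iff.mpr hi).neg_one_pow]; norm_num)] at h1
  have hB : rescale (-1 : ℤ) As = Bs := by
    rw [As, rescale_rescale]; simp
  rw [hB] at h1
  apply mul_right_cancel₀ (mul_ne_zero (W_ne_zero 1 (fun i => i % 2 = 1)) (W_ne_zero (-1) (fun i => i % 2 = 1)))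
  linear_combination As * W 1 (fun i => i % 2 = 1) * h1 + ex 2 As * W 1 (fun i => i % 2 = 1) * h

theorem G_eq (G : ℤ⟦X⟧) (h : G * W (-1) (fun i => i % 8 ≠ 4) = W 1 (fun i => i % 8 ≠ 4)) :
    G * As * ex 8 As = ex 4 As := by
  have w1 := W_mul 1 (fun i => i % 8 ≠ 4) (fun i => i % 8 = 4) (fun _ => True) (by intro i; simp; omega) (by intro i; omega)
  have w2 := W_mul (-1) (fun i => i % 8 ≠ 4) (fun i => i % 8 = 4) (fun _ => True) (by intro i; simp; omega) (by intro i; omega)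
  have h1 := congrArg (ex 4) As_odd
  rw [map_mul, map_mul, ex_ex 4 2 8 (by norm_num),
    W_ex 4 1 (fun i => i % 2 = 1) (fun i => i % 8 = 4) (by intro i; omega) (by intro i; omega),
    W_ex 4 (-1) (fun i => i % 2 = 1) (fun i => i % 8 = 4) (by intro i; omega) (by intro i; omega)] at h1
  have g := gauss
  rw [← w1, ← w2] at g
  apply mul_right_cancel₀ (mul_ne_zero (W_ne_zero 1 (fun i => i % 8 = 4)) (W_ne_zero 1 (fun i => i % 8 ≠ 4)))
  linear_combination (ex 8 As * G) * g + ex 8 As * W (-1) (fun i => i % 8 = 4) * h - W 1 (fun i => i % 8 ≠ 4) * h1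

theorem ww_succ (ε : ℤ) (p : ℕ → Prop) (f : ℤ⟦X⟧) (h : HasProd (fun i => ww ε p (i + 1)) f) :
    f = W ε p := by
  have h2 : HasProd (ww ε p ∘ fun i => i + 1) f := h
  rw [(add_left_injective 1).hasProd_iff] at h2
  · exact h2.unique (ww_hasProd ε p)
  · intro x hx
    rcases x with _ | x
    · simp [ww]
    · exact absurd ⟨x, rfl⟩ hx

theorem dist_gf (p : ℕ → Prop) [DecidablePred p] :
    (PowerSeries.mk fun m => (((Nat.Partition.distincts m).filter (fun lam => ∀ i ∈ lam.parts, p i)).card : ℤ))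
      = W 1 p := by
  apply ww_succ
  convert! Nat.Partition.hasProd_genFun (fun i c ↦ if p i ∧ c < 2 then (1 : ℤ) else 0) using 1
  · funext i
    rw [tsum_eq_single 0]
    · unfold ww
      by_cases hp : p (i + 1) <;> simp [hp, smul_eq_C_mul]
    · intro j hj
      rw [if_neg (by omega), smul_eq_C_mul, map_zero, zero_mul]
  · simp_rw [Nat.Partition.genFun, Nat.Partition.distincts, Finset.filter_filter, Finset.card_filter,
      Finsupp.prod, Finset.prod_boole]
    ext n
    simp only [coeff_mk, Nat.cast_sum]
    refine Finset.sum_congr rfl fun lam _ => ?_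
    have : (lam.parts.Nodup ∧ ∀ i ∈ lam.parts, p i) ↔
      ∀ i ∈ (Multiset.toFinsupp lam.parts).support, p i ∧ (Multiset.toFinsupp lam.parts) i < 2 := by
      simp only [Multiset.toFinsupp_support, Multiset.mem_toFinset, Multiset.toFinsupp_apply]
      rw [Multiset.nodup_iff_count_le_one]
      constructor
      · rintro ⟨h1, h2⟩ i hi
        exact ⟨h2 i hi, by have := h1 i; omega⟩
      · intro h
        refine ⟨fun i => ?_, fun i hi => (h i hi).1⟩
        by_cases hi : i ∈ lam.parts
        · have := (h i hi).2; omega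
        · rw [Multiset.count_eq_zero_of_notMem hi]; omega
    simp only [this]
    split_ifs <;> simp

theorem rest_gf (p : ℕ → Prop) [DecidablePred p] :
    (PowerSeries.mk fun m => (((Finset.univ : Finset (Nat.Partition m)).filter
      (fun mu => ∀ i ∈ mu.parts, p i)).card : ℤ)) * W (-1) p = 1 := by
  have h := Nat.Partition.hasProd_powerSeriesMk_card_restricted ℤ p
  have h2 : HasProd (fun i => ww (-1) p (i + 1)) (W (-1) p) := by
    have := ww_hasProd (-1) p
    rw [← (add_left_injective 1).hasProd_iff] at this
    · exact this
    · intro x hx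
      rcases x with _ | x
      · simp [ww]
      · exact absurd ⟨x, rfl⟩ hx
  have h3 := h.mul h2
  refine h3.unique ?_
  convert hasProd_one using 1
  funext i
  unfold ww
  by_cases hp : p (i + 1)
  · rw [if_pos hp, if_pos ⟨by omega, hp⟩]
    simp_rw [pow_mul, neg_smul, one_smul, ← sub_eq_add_neg]
    exact tsum_pow_mul_one_sub_of_constantCoeff_eq_zero (by simp)
  · rw [if_neg hp, if_neg (fun h => hp h.2), one_mul]

theorem G_gf : (PowerSeries.mk fun n => (regularOverpartitions 4 8 n : ℤ)) *
    W (-1) (fun i => i % 8 ≠ 4) = W 1 (fun i => i % 8 ≠ 4) := by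
  have h1 := dist_gf (fun i => i % 8 ≠ 4)
  have h2 := rest_gf (fun i => i % 8 ≠ 4)
  have h3 : (PowerSeries.mk fun n => (regularOverpartitions 4 8 n : ℤ)) =
      (PowerSeries.mk fun m => (((Nat.Partition.distincts m).filter
        (fun lam => ∀ i ∈ lam.parts, i % 8 ≠ 4)).card : ℤ)) *
      (PowerSeries.mk fun m => (((Finset.univ : Finset (Nat.Partition m)).filter
      (fun mu => ∀ i ∈ mu.parts, i % 8 ≠ 4)).card : ℤ)) := by
    ext n
    rw [coeff_mul, coeff_mk, Finset.Nat.sum_antidiagonal_eq_sum_range_succ_mk, regularOverpartitions]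
    push_cast
    refine Finset.sum_congr rfl fun m _ => ?_
    simp only [coeff_mk]
  rw [h3, mul_assoc, h2, mul_one, h1]

theorem main_two_mul (m : ℕ) (hm : m % 2 = 1) (h1 : ∀ x y, x * x + 1 * (y * y) ≠ m)
    (h2 : ∀ x y, x * x + 2 * (y * y) ≠ m) : 32 ∣ regularOverpartitions 4 8 (2 * m) := by
  have ha := core m hm h1 h2
  have hb := reduce _ (G_eq _ G_gf) Bs_As m hm
  have hc := dvd_add hb ha
  rw [sub_add_cancel, coeff_mk] at hc
  exact_mod_cast hc

theorem stmt_9 (n α β γ : ℕ) (k : ℕ) (hk : k ∈ ({1, 2, 3, 4, 5, 6} : Finset ℕ)) :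
    32 ∣ regularOverpartitions 4 8
        (16 * 3 ^ (4 * α) * 5 ^ (4 * β) * 7 ^ (4 * γ + 3) * (7 * n + k)
          + 2 * 3 ^ (4 * α) * 5 ^ (4 * β) * 7 ^ (4 * (γ + 1))) := by
  have hk' : 1 ≤ k ∧ k ≤ 6 := by
    simp only [Finset.mem_insert, Finset.mem_singleton] at hk; omega
  have e : 16 * 3 ^ (4 * α) * 5 ^ (4 * β) * 7 ^ (4 * γ + 3) * (7 * n + k)
          + 2 * 3 ^ (4 * α) * 5 ^ (4 * β) * 7 ^ (4 * (γ + 1)) =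
      2 * (7 ^ (2 * (2 * γ + 1) + 1) * (3 ^ (4 * α) * 5 ^ (4 * β) * (8 * (7 * n + k) + 7))) := by
    ring
  rw [e]
  have hr : ¬ 7 ∣ 3 ^ (4 * α) * 5 ^ (4 * β) * (8 * (7 * n + k) + 7) := by
    have p7 : Nat.Prime 7 := by norm_num
    intro h
    rcases (p7.dvd_mul).mp h with h | h
    · rcases (p7.dvd_mul).mp h with h | h
      · have := p7.dvd_of_dvd_pow h; omega
      · have := p7.dvd_of_dvd_pow h; omega
    · omega
  apply main_two_mul
  · rw [← Nat.odd_iff]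
    refine Odd.mul (Odd.pow (by decide)) (Odd.mul (Odd.mul (Odd.pow (by decide)) (Odd.pow (by decide))) ?_)
    rw [Nat.odd_iff]; omega
  · intro x y h
    exact hr (seven_descent 1 (Or.inl rfl) _ x y _ h)
  · intro x y h
    exact hr (seven_descent 2 (Or.inr rfl) _ x y _ h)
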